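/- Let α > 0 with α ≠ 1, and let β > 0 satisfy min{α,1}·β > n. For any β-concave probability density f on ℝ^n with finite sup-norm f_max, the α-Rényi entropy satisfies log(1/f_max) ≤ h_α(f) ≤ log(1/f_max) + (1/(α − 1))·Σ_{i=1}^n log((αβ − i)/(β − i)). -/

import Mathlib

/-!
Normalise the density to `H = (f / f_max) ^ (1 / β)`, so that `0 ≤ H ≤ 1`, `sup H = 1` and `1 / H`
is convex. Then `∫ f = f_max * ∫ H ^ β` and `∫ f ^ α = f_max ^ α * ∫ H ^ (α β)`. The lower bound on
the entropy is the pointwise comparison of `H ^ β` with `H ^ (α β)`. The upper bound says that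
`Φ q = (q - 1) ⋯ (q - n) * ∫ H ^ q` is nondecreasing in `q > n`
(`IsRecipConvex.prod_mul_integral_mono`), applied to the exponents `β` and `α β`.

By the layer cake formula, `∫ H ^ q = q * ∫ u in (0, 1), u ^ (q - 1) * N u` with
`N u = vol {u < H}`. Convexity of `1 / H`, used through homotheties centred at near-maximisers of
`H`, shows that `W u = N u * (u / (1 - u)) ^ n` is nondecreasing (`IsRecipConvex.meas_scaling`).
Hence `Φ q = n! * ∫ W dμ_q`, where `μ_q` is the Beta probability measure with density proportional
to `u ^ (q - 1) * ((1 - u) / u) ^ n` (its normalisation is `betaKernel_integral`). The densities of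
`μ_p` and `μ_q` cross once, the larger exponent dominating near `u = 1`, so `Φ p ≤ Φ q` for `p < q`.
The monotonicity of `W` also yields the integrability of `H ^ q` for every `q > n`.
-/

open MeasureTheory

/-- A function `f` on `ℝ^n` is β-concave (β > 0) if `f(x) = g(x)^{-β}` for some convex
function `g : ℝ^n → (0, ∞]`; the effective domain of `g` is encoded as a convex set `s` on
which a positive real-valued convex function `g` is given, with `f = 0` outside `s`. -/
def IsBetaConcave (n : ℕ) (β : ℝ) (f : (Fin n → ℝ) → ℝ) : Prop :=
  ∃ (s : Set (Fin n → ℝ)) (g : (Fin n → ℝ) → ℝ),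
    ConvexOn ℝ s g ∧ (∀ x ∈ s, 0 < g x ∧ f x = g x ^ (-β)) ∧ ∀ x ∉ s, f x = 0

open Set

/-! ### The beta kernel on the unit interval -/

/-- The beta integral `B(q - n, n + 1)`, computed by the recursion
`K (n + 1) q = K n (q - 1) - K n q` for the kernel `K n q = u ^ (q - 1) * ((1 - u) / u) ^ n`. -/
lemma betaKernel_integral (n : ℕ) : ∀ q : ℝ, (n : ℝ) < q →
    IntegrableOn (fun u : ℝ => u ^ (q - 1) * ((1 - u) / u) ^ n) (Ioo 0 1) ∧
    ∫ u in Ioo (0 : ℝ) 1, u ^ (q - 1) * ((1 - u) / u) ^ n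
      = (n.factorial : ℝ) / ∏ i ∈ Finset.range (n + 1), (q - i) := by
  induction n with
  | zero =>
    intro q hq
    have hq0 : 0 < q := by simpa using hq
    simp only [pow_zero, mul_one]
    refine ⟨(intervalIntegral.integrableOn_Ioo_rpow_iff one_pos).2 (by linarith), ?_⟩
    rw [← integral_Ioc_eq_integral_Ioo, ← intervalIntegral.integral_of_le zero_le_one,
      integral_rpow (Or.inl (by linarith))]
    simp [Real.zero_rpow hq0.ne']
  | succ n ih =>
    intro q hq
    push_cast at hq
    obtain ⟨i1, e1⟩ := ih (q - 1) (by linarith)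
    obtain ⟨i2, e2⟩ := ih q (by linarith)
    have hcongr : EqOn (fun u : ℝ => u ^ (q - 1 - 1) * ((1 - u) / u) ^ n
        - u ^ (q - 1) * ((1 - u) / u) ^ n)
        (fun u : ℝ => u ^ (q - 1) * ((1 - u) / u) ^ (n + 1)) (Ioo 0 1) := by
      intro u hu
      have hu0 : u ≠ 0 := hu.1.ne'
      simp only
      rw [Real.rpow_sub_one hu0 (q - 1), pow_succ]
      field_simp
    refine ⟨(i1.sub i2).congr_fun hcongr measurableSet_Ioo, ?_⟩
    rw [← setIntegral_congr_fun measurableSet_Ioo hcongr, integral_sub i1 i2, e1, e2]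
    have hpos : ∀ i ∈ Finset.range n, (q - ((i : ℝ) + 1)) ≠ 0 := by
      intro i hi
      have : (i : ℝ) + 1 ≤ n := by exact_mod_cast Finset.mem_range.1 hi
      linarith
    have hn0 : (0 : ℝ) ≤ n := n.cast_nonneg
    have hP : ∏ i ∈ Finset.range n, (q - ((i : ℝ) + 1)) ≠ 0 := Finset.prod_ne_zero_iff.2 hpos
    have h1 : ∏ i ∈ Finset.range (n + 1), (q - 1 - (i : ℝ))
        = (∏ i ∈ Finset.range n, (q - ((i : ℝ) + 1))) * (q - (n + 1)) := by
      rw [Finset.prod_range_succ]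
      congr 1
      · exact Finset.prod_congr rfl fun i _ => by ring
      · ring
    have h2 : ∏ i ∈ Finset.range (n + 1), (q - (i : ℝ))
        = (∏ i ∈ Finset.range n, (q - ((i : ℝ) + 1))) * q := by
      rw [Finset.prod_range_succ']; simp
    have h3 : ∏ i ∈ Finset.range (n + 1 + 1), (q - (i : ℝ))
        = (∏ i ∈ Finset.range n, (q - ((i : ℝ) + 1))) * q * (q - (n + 1)) := by
      rw [Finset.prod_range_succ, h2]; push_cast; ring
    have hq1 : q ≠ 0 := by linarith
    have hq2 : q - ((n : ℝ) + 1) ≠ 0 := by linarith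
    rw [h1, h2, h3, Nat.factorial_succ]
    push_cast
    field_simp
    ring

lemma prod_range_eq_mul_prod_Icc (n : ℕ) (q : ℝ) :
    ∏ i ∈ Finset.range (n + 1), (q - (i : ℝ)) = q * ∏ i ∈ Finset.Icc 1 n, (q - (i : ℝ)) := by
  induction n with
  | zero => simp
  | succ n ih =>
    rw [Finset.prod_range_succ, ih, Finset.prod_Icc_succ_top (by omega)]
    ring

/-! ### Superlevel sets of the reciprocal of a convex function -/

/-- The structure of a β-concave density after normalisation: `H` takes values in `[0, 1]`, has
supremum `1`, and `1 / H` (equal to `∞` where `H = 0`) is convex. -/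
structure IsRecipConvex {n : ℕ} (H : (Fin n → ℝ) → ℝ) : Prop where
  nonneg : ∀ x, 0 ≤ H x
  le_one : ∀ x, H x ≤ 1
  exists_gt : ∀ r < (1 : ℝ), ∃ x, r < H x
  convex : ∀ x y (a b : ℝ), 0 < H x → 0 < H y → 0 ≤ a → 0 ≤ b → a + b = 1 →
    0 < H (a • x + b • y) ∧ (H (a • x + b • y))⁻¹ ≤ a * (H x)⁻¹ + b * (H y)⁻¹

/-- Contracting `{u < H}` towards a near-maximiser of `H` lands inside `{v < H}`; letting the
near-maximiser approach the supremum gives the sharp ratio. -/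
lemma IsRecipConvex.meas_scaling {n : ℕ} {H : (Fin n → ℝ) → ℝ} (hH : IsRecipConvex H)
    {u v : ℝ} (hu : 0 < u) (huv : u ≤ v) (hv : v < 1)
    (hfin : ∀ t, 0 < t → volume {x | t < H x} ≠ ⊤) :
    volume.real {x | u < H x} * (u / (1 - u)) ^ n
      ≤ volume.real {x | v < H x} * (v / (1 - v)) ^ n := by
  have hv0 : 0 < v := hu.trans_le huv
  have hinv : v⁻¹ ≤ u⁻¹ := inv_anti₀ hu huv
  have h1v : 1 < v⁻¹ := (one_lt_inv₀ hv0).2 hv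
  have key : ∀ m, 1 < m → m < v⁻¹ →
      ((v⁻¹ - m) / (u⁻¹ - m)) ^ n * volume.real {x | u < H x} ≤ volume.real {x | v < H x} := by
    intro m hm1 hmv
    obtain ⟨x₀, hx₀⟩ := hH.exists_gt m⁻¹ (inv_lt_one_of_one_lt₀ hm1)
    have hm0 : 0 < m := by linarith
    have hH0 : 0 < H x₀ := (inv_pos.2 hm0).trans hx₀
    have hx₀' : (H x₀)⁻¹ < m := inv_lt_of_inv_lt₀ hm0 hx₀
    set l := (v⁻¹ - m) / (u⁻¹ - m) with hl
    have hd : 0 < u⁻¹ - m := by linarith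
    have hl0 : 0 < l := div_pos (by linarith) hd
    have hl1 : l ≤ 1 := (div_le_one hd).2 (by linarith)
    have hlm : (1 - l) * m + l * u⁻¹ = v⁻¹ := by
      have : l * (u⁻¹ - m) = v⁻¹ - m := div_mul_cancel₀ _ hd.ne'
      linarith
    have hsub : AffineMap.homothety x₀ l '' {x | u < H x} ⊆ {x | v < H x} := by
      rintro _ ⟨x, hx, rfl⟩
      have hx' : u < H x := hx
      have hxpos : 0 < H x := hu.trans hx'
      have hxi : (H x)⁻¹ < u⁻¹ := inv_strictAnti₀ hu hx'
      obtain ⟨hp, hc⟩ := hH.convex x₀ x (1 - l) l hH0 hxpos (by linarith) hl0.le (by ring)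
      have heq : AffineMap.homothety x₀ l x = (1 - l) • x₀ + l • x := by
        rw [AffineMap.homothety_apply]
        simp only [vsub_eq_sub, vadd_eq_add]
        module
      simp only [mem_ofPred_eq, heq]
      have hlt : (H ((1 - l) • x₀ + l • x))⁻¹ < v⁻¹ := by
        have h1 : (1 - l) * (H x₀)⁻¹ ≤ (1 - l) * m :=
          mul_le_mul_of_nonneg_left hx₀'.le (by linarith)
        have h2 : l * (H x)⁻¹ < l * u⁻¹ := mul_lt_mul_of_pos_left hxi hl0
        linarith
      exact (inv_lt_inv₀ hp hv0).1 hlt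
    have hmeas := measureReal_mono hsub (hfin v hv0)
    rw [measureReal_def, Measure.addHaar_image_homothety, ENNReal.toReal_mul,
      ENNReal.toReal_ofReal (abs_nonneg _), abs_of_pos (pow_pos hl0 _)] at hmeas
    simpa [measureReal_def] using hmeas
  have hlim : ((v⁻¹ - 1) / (u⁻¹ - 1)) ^ n * volume.real {x | u < H x}
      ≤ volume.real {x | v < H x} := by
    have ht : Filter.Tendsto
        (fun m : ℝ => ((v⁻¹ - m) / (u⁻¹ - m)) ^ n * volume.real {x | u < H x})
        (nhdsWithin 1 (Ioi 1))
        (nhds (((v⁻¹ - 1) / (u⁻¹ - 1)) ^ n * volume.real {x | u < H x})) := by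
      apply Filter.Tendsto.mono_left _ nhdsWithin_le_nhds
      have : ContinuousAt
          (fun m : ℝ => ((v⁻¹ - m) / (u⁻¹ - m)) ^ n * volume.real {x | u < H x}) 1 := by
        have hne : u⁻¹ - 1 ≠ 0 := by linarith
        fun_prop (disch := assumption)
      exact this
    refine le_of_tendsto ht ?_
    filter_upwards [Ioo_mem_nhdsGT h1v] with m hm
    exact key m hm.1 hm.2
  have hu1 : u < 1 := huv.trans_lt hv
  have e1 : ((v⁻¹ - 1) / (u⁻¹ - 1)) * (v / (1 - v)) = u / (1 - u) := by
    have : 1 - u ≠ 0 := by linarith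
    have : 1 - v ≠ 0 := by linarith
    field_simp
  have hvp : 0 < v / (1 - v) := div_pos hv0 (by linarith)
  calc volume.real {x | u < H x} * (u / (1 - u)) ^ n
      = ((v⁻¹ - 1) / (u⁻¹ - 1)) ^ n * volume.real {x | u < H x} * (v / (1 - v)) ^ n := by
        rw [← e1, mul_pow]; ring
    _ ≤ _ := mul_le_mul_of_nonneg_right hlim (pow_nonneg hvp.le _)

/-- Layer cake with exponent `q`, over `(0, 1)`, with integrability as part of the conclusion.
Integrability near `u = 0` comes from `meas_scaling` with `v = 1 / 2`. -/
lemma IsRecipConvex.layer_cake {n : ℕ} {H : (Fin n → ℝ) → ℝ} (hH : IsRecipConvex H)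
    (hmeas : AEMeasurable H) (hfin : ∀ t, 0 < t → volume {x | t < H x} ≠ ⊤)
    {q : ℝ} (hq : (n : ℝ) < q) :
    IntegrableOn (fun u : ℝ => u ^ (q - 1) * volume.real {x | u < H x}) (Ioo 0 1) ∧
    Integrable (fun x => H x ^ q) ∧
    ∫ x, H x ^ q = q * ∫ u in Ioo (0 : ℝ) 1, u ^ (q - 1) * volume.real {x | u < H x} := by
  have hq0 : 0 < q := lt_of_le_of_lt n.cast_nonneg hq
  have hNanti : Antitone (fun u : ℝ => volume {x | u < H x}) := fun a b hab =>
    measure_mono fun x hx => lt_of_le_of_lt hab hx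
  have hNmeas : Measurable (fun u : ℝ => volume.real {x | u < H x}) :=
    hNanti.measurable.ennreal_toReal
  have hInt : IntegrableOn (fun u : ℝ => u ^ (q - 1) * volume.real {x | u < H x}) (Ioo 0 1) := by
    set K : ℝ := volume.real {x | (1 / 2 : ℝ) < H x} * ((1 / 2) / (1 - 1 / 2)) ^ n with hK
    have hK0 : 0 ≤ K := by positivity
    have hdom : IntegrableOn (fun u : ℝ => u ^ (q - 1) * ((1 - u) / u) ^ n * K
        + u ^ (q - 1) * K) (Ioo 0 1) :=
      ((betaKernel_integral n q hq).1.mul_const K).add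
        (((intervalIntegral.integrableOn_Ioo_rpow_iff one_pos).2 (by linarith)).mul_const K)
    refine Integrable.mono' hdom ?_ ?_
    · exact ((measurable_id.pow_const _).mul hNmeas).aestronglyMeasurable
    · refine (ae_restrict_iff' measurableSet_Ioo).2 (Filter.Eventually.of_forall ?_)
      intro u hu
      have hup : 0 < u ^ (q - 1) := Real.rpow_pos_of_pos hu.1 _
      have hr : 0 < (1 - u) / u := div_pos (by linarith [hu.2]) hu.1
      rw [Real.norm_of_nonneg (by positivity)]
      rcases le_total u (1 / 2) with h | h
      · have hs := hH.meas_scaling hu.1 h (by norm_num) hfin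
        have : volume.real {x | u < H x} ≤ ((1 - u) / u) ^ n * K := by
          have he : (u / (1 - u)) ^ n = (((1 - u) / u) ^ n)⁻¹ := by
            rw [← inv_pow, inv_div]
          rw [he, ← div_eq_mul_inv, div_le_iff₀ (by positivity)] at hs
          rw [← hK] at hs
          linarith [mul_comm K (((1 - u) / u) ^ n)]
        have := mul_le_mul_of_nonneg_left this hup.le
        have h0 : 0 ≤ u ^ (q - 1) * K := by positivity
        linarith
      · have : volume.real {x | u < H x} ≤ K := by
          rw [hK]; norm_num
          exact ENNReal.toReal_mono (by simpa using hfin (1 / 2) (by norm_num))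
            (by simpa using hNanti h)
        have := mul_le_mul_of_nonneg_left this hup.le
        have h0 : 0 ≤ u ^ (q - 1) * ((1 - u) / u) ^ n * K := by positivity
        linarith
  have hnn : 0 ≤ᵐ[volume.restrict (Ioo (0 : ℝ) 1)]
      fun u : ℝ => u ^ (q - 1) * volume.real {x | u < H x} := by
    refine (ae_restrict_iff' measurableSet_Ioo).2 (Filter.Eventually.of_forall ?_)
    intro u hu
    exact mul_nonneg (Real.rpow_nonneg hu.1.le _) measureReal_nonneg
  have hI0 : 0 ≤ ∫ u in Ioo (0 : ℝ) 1, u ^ (q - 1) * volume.real {x | u < H x} :=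
    integral_nonneg_of_ae hnn
  have hlc : ∫⁻ x, ENNReal.ofReal (H x ^ q) = ENNReal.ofReal
      (q * ∫ u in Ioo (0 : ℝ) 1, u ^ (q - 1) * volume.real {x | u < H x}) := by
    rw [lintegral_rpow_eq_lintegral_meas_lt_mul volume (Filter.Eventually.of_forall hH.nonneg)
      hmeas hq0, ENNReal.ofReal_mul hq0.le, ofReal_integral_eq_lintegral_ofReal hInt hnn]
    congr 1
    rw [← lintegral_indicator measurableSet_Ioi, ← lintegral_indicator measurableSet_Ioo]
    refine lintegral_congr fun u => ?_
    by_cases h0 : 0 < u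
    · rw [indicator_of_mem (show u ∈ Ioi (0 : ℝ) from h0)]
      by_cases h1 : u < 1
      · rw [indicator_of_mem (show u ∈ Ioo (0 : ℝ) 1 from ⟨h0, h1⟩),
          ENNReal.ofReal_mul (Real.rpow_nonneg h0.le _), measureReal_def,
          ENNReal.ofReal_toReal (hfin u h0), mul_comm]
      · rw [indicator_of_notMem (fun h : u ∈ Ioo (0 : ℝ) 1 => h1 h.2)]
        have : {x | u < H x} = ∅ := by
          ext x
          simp only [mem_ofPred_eq, mem_empty_iff_false, iff_false, not_lt]
          exact (hH.le_one x).trans (not_lt.1 h1)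
        simp [this]
    · rw [indicator_of_notMem (fun h : u ∈ Ioi (0 : ℝ) => h0 h),
        indicator_of_notMem (fun h : u ∈ Ioo (0 : ℝ) 1 => h0 h.1)]
  have hHnn : 0 ≤ᵐ[volume] fun x => H x ^ q :=
    Filter.Eventually.of_forall fun x => Real.rpow_nonneg (hH.nonneg x) _
  have hHm : AEStronglyMeasurable (fun x => H x ^ q) volume :=
    (hmeas.pow_const q).aestronglyMeasurable
  refine ⟨hInt, ⟨hHm, ?_⟩, ?_⟩
  · rw [hasFiniteIntegral_iff_ofReal hHnn, hlc]
    exact ENNReal.ofReal_lt_top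
  · rw [integral_eq_lintegral_of_nonneg_ae hHnn hHm, hlc, ENNReal.toReal_ofReal]
    positivity

/-! ### Monotonicity in the exponent -/

/-- The quantity `(q - 1) ⋯ (q - n) * ∫ H ^ q` is nondecreasing in `q > n`. It is constant for
`H = 1 / (1 + ‖x‖)`, for which `W u = vol {u < H} * (u / (1 - u)) ^ n` is constant. In general
`W` is nondecreasing, and the normalised beta kernels for `p < q` cross exactly once, at `u₀`. -/
lemma IsRecipConvex.prod_mul_integral_mono {n : ℕ} {H : (Fin n → ℝ) → ℝ}
    (hH : IsRecipConvex H) (hmeas : AEMeasurable H)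
    (hfin : ∀ t, 0 < t → volume {x | t < H x} ≠ ⊤)
    {p q : ℝ} (hp : (n : ℝ) < p) (hpq : p < q) :
    (∏ i ∈ Finset.Icc 1 n, (p - (i : ℝ))) * ∫ x, H x ^ p
      ≤ (∏ i ∈ Finset.Icc 1 n, (q - (i : ℝ))) * ∫ x, H x ^ q := by
  have hq : (n : ℝ) < q := hp.trans hpq
  obtain ⟨ip, -, ep⟩ := hH.layer_cake hmeas hfin hp
  obtain ⟨iq, -, eq⟩ := hH.layer_cake hmeas hfin hq
  obtain ⟨jp, bp⟩ := betaKernel_integral n p hp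
  obtain ⟨jq, bq⟩ := betaKernel_integral n q hq
  set N : ℝ → ℝ := fun u => volume.real {x | u < H x} with hN
  set cp : ℝ := ∏ i ∈ Finset.range (n + 1), (p - (i : ℝ)) with hcp
  set cq : ℝ := ∏ i ∈ Finset.range (n + 1), (q - (i : ℝ)) with hcq
  have hpi : ∀ i ∈ Finset.range (n + 1), 0 < p - (i : ℝ) := by
    intro i hi
    have : (i : ℝ) ≤ n := by exact_mod_cast Nat.lt_succ_iff.1 (Finset.mem_range.1 hi)
    linarith
  have hcp0 : 0 < cp := Finset.prod_pos hpi
  have hcpq : cp < cq := Finset.prod_lt_prod hpi (fun i _ => by linarith)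
    ⟨0, by simp, by linarith⟩
  have hcq0 : 0 < cq := hcp0.trans hcpq
  have hd : 0 < q - p := by linarith
  set u₀ : ℝ := (cp / cq) ^ (q - p)⁻¹ with hu₀
  have hu₀0 : 0 < u₀ := Real.rpow_pos_of_pos (div_pos hcp0 hcq0) _
  have hu₀1 : u₀ < 1 := Real.rpow_lt_one (div_pos hcp0 hcq0).le ((div_lt_one hcq0).2 hcpq)
    (inv_pos.2 hd)
  have hu₀p : cq * u₀ ^ (q - p) = cp := by
    rw [hu₀, ← Real.rpow_mul (div_pos hcp0 hcq0).le, inv_mul_cancel₀ hd.ne', Real.rpow_one]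
    field_simp
  set K : ℝ := N u₀ * (u₀ / (1 - u₀)) ^ n with hK
  -- The difference of the two normalised kernels integrates to zero, and has the sign of
  -- `u - u₀`, as has `W u - K`.
  have hle : ∫ u in Ioo (0 : ℝ) 1, (cq * (u ^ (q - 1) * ((1 - u) / u) ^ n)
        - cp * (u ^ (p - 1) * ((1 - u) / u) ^ n)) * K
      ≤ ∫ u in Ioo (0 : ℝ) 1, (cq * (u ^ (q - 1) * N u) - cp * (u ^ (p - 1) * N u)) := by
    refine setIntegral_mono_on (((jq.const_mul cq).sub (jp.const_mul cp)).mul_const K)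
      ((iq.const_mul cq).sub (ip.const_mul cp)) measurableSet_Ioo ?_
    intro u hu
    have hup : 0 < u ^ (p - 1) := Real.rpow_pos_of_pos hu.1 _
    have hsplit : u ^ (q - 1) = u ^ (p - 1) * u ^ (q - p) := by
      rw [← Real.rpow_add hu.1]; congr 1; ring
    have hr : 0 < (1 - u) / u := div_pos (by linarith [hu.2]) hu.1
    have hinv : (u / (1 - u)) ^ n * ((1 - u) / u) ^ n = 1 := by
      rw [← mul_pow, ← inv_div, inv_mul_cancel₀ hr.ne', one_pow]
    have hrn : 0 < ((1 - u) / u) ^ n := pow_pos hr n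
    have hWN : N u * (u / (1 - u)) ^ n * ((1 - u) / u) ^ n = N u := by
      rw [mul_assoc, hinv, mul_one]
    rw [hsplit]
    suffices 0 ≤ u ^ (p - 1) * ((cq * u ^ (q - p) - cp) * (N u - K * ((1 - u) / u) ^ n)) by
      linarith
    refine mul_nonneg hup.le ?_
    rcases le_total u u₀ with h | h
    · have hs := mul_le_mul_of_nonneg_right (hH.meas_scaling hu.1 h hu₀1 hfin) hrn.le
      have hs' : N u ≤ K * ((1 - u) / u) ^ n := hWN ▸ hs
      have hpow : u ^ (q - p) ≤ u₀ ^ (q - p) := Real.rpow_le_rpow hu.1.le h hd.le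
      have := mul_le_mul_of_nonneg_left hpow hcq0.le
      exact mul_nonneg_of_nonpos_of_nonpos (by linarith) (by linarith)
    · have hs := mul_le_mul_of_nonneg_right (hH.meas_scaling hu₀0 h hu.2 hfin) hrn.le
      have hs' : K * ((1 - u) / u) ^ n ≤ N u := hWN ▸ hs
      have hpow : u₀ ^ (q - p) ≤ u ^ (q - p) := Real.rpow_le_rpow hu₀0.le h hd.le
      have := mul_le_mul_of_nonneg_left hpow hcq0.le
      exact mul_nonneg (by linarith) (by linarith)
  rw [integral_mul_const, integral_sub (jq.const_mul cq) (jp.const_mul cp),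
    integral_sub (iq.const_mul cq) (ip.const_mul cp), integral_const_mul, integral_const_mul,
    integral_const_mul, integral_const_mul, bp, bq, mul_div_cancel₀ _ hcp0.ne',
    mul_div_cancel₀ _ hcq0.ne', sub_self, zero_mul] at hle
  rw [ep, eq]
  rw [hcp, hcq, prod_range_eq_mul_prod_Icc, prod_range_eq_mul_prod_Icc] at hle
  linarith

/-! ### Normalisation of a β-concave density -/

lemma IsBetaConcave.nonneg {n : ℕ} {β : ℝ} {f : (Fin n → ℝ) → ℝ} (hf : IsBetaConcave n β f)
    (x : Fin n → ℝ) : 0 ≤ f x := by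
  obtain ⟨s, g, -, hs, hns⟩ := hf
  by_cases hx : x ∈ s
  · rw [(hs x hx).2]; exact Real.rpow_nonneg (hs x hx).1.le _
  · exact (hns x hx).ge

lemma IsBetaConcave.isRecipConvex {n : ℕ} {β M : ℝ} {f : (Fin n → ℝ) → ℝ}
    (hf : IsBetaConcave n β f) (hβ : 0 < β) (hM : 0 < M) (hfmax : IsLUB (range f) M) :
    IsRecipConvex fun x => (f x / M) ^ β⁻¹ := by
  have hf0 := hf.nonneg
  have hβi : 0 < β⁻¹ := inv_pos.2 hβ
  obtain ⟨s, g, hg, hs, hns⟩ := hf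
  have hH : ∀ x ∈ s, ((f x / M) ^ β⁻¹)⁻¹ = g x * M ^ β⁻¹ := by
    intro x hx
    obtain ⟨hgx, hfx⟩ := hs x hx
    rw [Real.div_rpow (hf0 x) hM.le, inv_div, hfx, ← Real.rpow_mul hgx.le, neg_mul,
      mul_inv_cancel₀ hβ.ne', Real.rpow_neg_one, div_inv_eq_mul, mul_comm]
  have hpos : ∀ x ∈ s, 0 < (f x / M) ^ β⁻¹ := by
    intro x hx
    obtain ⟨hgx, hfx⟩ := hs x hx
    have : 0 < f x := hfx ▸ Real.rpow_pos_of_pos hgx _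
    positivity
  have hmem : ∀ x, 0 < (f x / M) ^ β⁻¹ → x ∈ s := by
    intro x hx
    by_contra h
    simp [hns x h, Real.zero_rpow hβi.ne'] at hx
  refine ⟨fun x => Real.rpow_nonneg (div_nonneg (hf0 x) hM.le) _, fun x => ?_, fun r hr => ?_, ?_⟩
  · exact Real.rpow_le_one (div_nonneg (hf0 x) hM.le)
      ((div_le_one hM).2 (hfmax.1 (mem_range_self x))) hβi.le
  · have h01 : max r 0 ^ β < 1 := Real.rpow_lt_one (le_max_right _ _) (max_lt hr one_pos) hβ
    obtain ⟨_, ⟨x, rfl⟩, hx, -⟩ := hfmax.exists_between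
      (show max r 0 ^ β * M < M by nlinarith)
    refine ⟨x, (le_max_left r 0).trans_lt ?_⟩
    rw [← lt_div_iff₀ hM] at hx
    have := Real.rpow_lt_rpow (Real.rpow_nonneg (le_max_right r 0) β) hx hβi
    rwa [Real.rpow_rpow_inv (le_max_right _ _) hβ.ne'] at this
  · intro x y a b hx hy ha hb hab
    have hxs := hmem x hx
    have hys := hmem y hy
    have hz := hg.1 hxs hys ha hb hab
    refine ⟨hpos _ hz, ?_⟩
    rw [hH _ hz, hH _ hxs, hH _ hys]
    have := mul_le_mul_of_nonneg_right (hg.2 hxs hys ha hb hab)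
      (Real.rpow_nonneg hM.le β⁻¹)
    simp only [smul_eq_mul] at this
    linarith

/-- For `α > 0`, `α ≠ 1`, `β > 0` with `min{α,1}·β > n`, and any β-concave probability
density `f` on `ℝ^n` with finite sup-norm `f_max`, the α-Rényi entropy
`h_α(f) = (1/(1-α)) log ∫ f^α` satisfies
`log(1/f_max) ≤ h_α(f) ≤ log(1/f_max) + (1/(α-1)) ∑_{i=1}^n log((αβ-i)/(β-i))`. -/
theorem renyi_entropy_betaconcave_bounds
    (n : ℕ) (α β : ℝ) (hα : 0 < α) (hα1 : α ≠ 1) (hβ : 0 < β)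
    (hαβ : (n : ℝ) < min α 1 * β)
    (f : (Fin n → ℝ) → ℝ) (fmax : ℝ)
    (hf_prob : (∫ x, f x) = 1)
    (hf : IsBetaConcave n β f)
    (hfmax : IsLUB (Set.range f) fmax) :
    Real.log (1 / fmax) ≤ (1 / (1 - α)) * Real.log (∫ x, f x ^ α) ∧
      (1 / (1 - α)) * Real.log (∫ x, f x ^ α) ≤
        Real.log (1 / fmax) +
          (1 / (α - 1)) * ∑ i ∈ Finset.Icc 1 n, Real.log ((α * β - i) / (β - i)) := by
  have hf0 := hf.nonneg
  have hM : 0 < fmax := by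
    by_contra hM
    have : f = fun _ => 0 := by
      funext x
      exact le_antisymm ((hfmax.1 (mem_range_self x)).trans (not_lt.1 hM)) (hf0 x)
    simp [this] at hf_prob
  have hint : Integrable f := by
    by_contra h
    rw [integral_undef h] at hf_prob
    exact zero_ne_one hf_prob
  have hnβ : (n : ℝ) < β := by
    refine hαβ.trans_le ?_
    nlinarith [min_le_right α 1]
  have hnαβ : (n : ℝ) < α * β := hαβ.trans_le
    (mul_le_mul_of_nonneg_right (min_le_left α 1) hβ.le)
  set H : (Fin n → ℝ) → ℝ := fun x => (f x / fmax) ^ β⁻¹ with hHdef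
  have hH : IsRecipConvex H := hf.isRecipConvex hβ hM hfmax
  have hHf : ∀ x, H x ^ β = f x / fmax := fun x =>
    Real.rpow_inv_rpow (div_nonneg (hf0 x) hM.le) hβ.ne'
  have hHm : AEMeasurable H := (hint.aestronglyMeasurable.aemeasurable.div_const _).pow_const _
  have hfin : ∀ t, 0 < t → volume {x | t < H x} ≠ ⊤ := by
    intro t ht
    refine ((measure_mono ?_).trans_lt
      ((hint.div_const fmax).measure_gt_lt_top (Real.rpow_pos_of_pos ht β))).ne
    intro x hx
    rw [mem_ofPred_eq, ← hHf]
    exact Real.rpow_lt_rpow ht.le hx hβ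
  have hI1 : ∫ x, H x ^ β = fmax⁻¹ := by
    simp_rw [hHf, integral_div, hf_prob, one_div]
  have hIα : ∫ x, f x ^ α = fmax ^ α * ∫ x, H x ^ (α * β) := by
    rw [← integral_const_mul]
    refine integral_congr_ae (Filter.Eventually.of_forall fun x => ?_)
    simp only
    rw [mul_comm α β, Real.rpow_mul (hH.nonneg x), hHf, Real.div_rpow (hf0 x) hM.le]
    have := Real.rpow_pos_of_pos hM α
    field_simp
  obtain ⟨-, i1, -⟩ := hH.layer_cake hHm hfin hnβ
  obtain ⟨-, iα, -⟩ := hH.layer_cake hHm hfin hnαβ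
  -- Pointwise comparison of powers, valid since `0 ≤ H ≤ 1` and both exponents are positive.
  have hpow : ∀ x (p q : ℝ), 0 < p → p ≤ q → H x ^ q ≤ H x ^ p := fun x p q hp hpq =>
    Real.rpow_le_rpow_of_exponent_ge_of_imp (hH.nonneg x) (hH.le_one x) hpq
      fun _ h => absurd h (hp.trans_le hpq).ne'
  have hfac : ∀ q : ℝ, (n : ℝ) < q → ∀ i ∈ Finset.Icc 1 n, 0 < q - (i : ℝ) := by
    intro q hq i hi
    have : (i : ℝ) ≤ n := by exact_mod_cast (Finset.mem_Icc.1 hi).2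
    linarith
  have hP1 := Finset.prod_pos (hfac β hnβ)
  have hPα := Finset.prod_pos (hfac _ hnαβ)
  have hS : ∑ i ∈ Finset.Icc 1 n, Real.log ((α * β - i) / (β - i))
      = Real.log (∏ i ∈ Finset.Icc 1 n, (α * β - (i : ℝ)))
        - Real.log (∏ i ∈ Finset.Icc 1 n, (β - (i : ℝ))) := by
    rw [Real.log_prod fun i hi => (hfac _ hnαβ i hi).ne',
      Real.log_prod fun i hi => (hfac _ hnβ i hi).ne', ← Finset.sum_sub_distrib]
    exact Finset.sum_congr rfl fun i hi =>
      Real.log_div (hfac _ hnαβ i hi).ne' (hfac _ hnβ i hi).ne'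
  set P1 := ∏ i ∈ Finset.Icc 1 n, (β - (i : ℝ))
  set Pα := ∏ i ∈ Finset.Icc 1 n, (α * β - (i : ℝ))
  set J := ∫ x, H x ^ (α * β)
  have hMi : 0 < fmax⁻¹ := inv_pos.2 hM
  have hlogJ : 0 < J → (1 / (1 - α)) * Real.log (fmax ^ α * J)
      = -Real.log fmax + (1 / (1 - α)) * (Real.log fmax + Real.log J) := by
    intro hJ
    have h1 : 1 - α ≠ 0 := sub_ne_zero.2 hα1.symm
    rw [Real.log_mul (Real.rpow_pos_of_pos hM α).ne' hJ.ne', Real.log_rpow hM]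
    field_simp
    ring
  have hneg : 1 / (α - 1) = -(1 / (1 - α)) := by rw [← neg_sub 1 α, div_neg]
  rw [hS, hIα, one_div fmax, Real.log_inv, hneg]
  rcases lt_or_gt_of_ne hα1 with h | h
  · have hlt : α * β < β := by nlinarith
    have hlow : fmax⁻¹ ≤ J := hI1 ▸ integral_mono i1 iα fun x => hpow x _ _ (by positivity) hlt.le
    have hJ : 0 < J := hMi.trans_le hlow
    have hup : Pα * J ≤ P1 * fmax⁻¹ := hI1 ▸ hH.prod_mul_integral_mono hHm hfin hnαβ hlt
    have l1 := Real.log_le_log hMi hlow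
    have l2 := Real.log_le_log (mul_pos hPα hJ) hup
    rw [Real.log_mul hPα.ne' hJ.ne', Real.log_mul hP1.ne' hMi.ne', Real.log_inv] at l2
    rw [Real.log_inv] at l1
    rw [hlogJ hJ]
    have hc : 0 ≤ 1 / (1 - α) := one_div_nonneg.2 (by linarith)
    have t1 := mul_nonneg hc (show 0 ≤ Real.log fmax + Real.log J by linarith)
    have t2 := mul_le_mul_of_nonneg_left
      (show Real.log fmax + Real.log J ≤ -(Real.log Pα - Real.log P1) by linarith) hc
    constructor <;> linarith
  · have hlt : β < α * β := by nlinarith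
    have hlow : J ≤ fmax⁻¹ := hI1 ▸ integral_mono iα i1 fun x => hpow x _ _ hβ hlt.le
    have hup : P1 * fmax⁻¹ ≤ Pα * J := hI1 ▸ hH.prod_mul_integral_mono hHm hfin hnβ hlt
    have hJ : 0 < J := pos_of_mul_pos_right ((mul_pos hP1 hMi).trans_le hup) hPα.le
    have l1 := Real.log_le_log hJ hlow
    have l2 := Real.log_le_log (mul_pos hP1 hMi) hup
    rw [Real.log_mul hPα.ne' hJ.ne', Real.log_mul hP1.ne' hMi.ne', Real.log_inv] at l2
    rw [Real.log_inv] at l1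
    rw [hlogJ hJ]
    have hc : 1 / (1 - α) ≤ 0 := one_div_nonpos.2 (by linarith)
    have t1 := mul_nonneg_of_nonpos_of_nonpos hc
      (show Real.log fmax + Real.log J ≤ 0 by linarith)
    have t2 := mul_le_mul_of_nonpos_left
      (show -(Real.log Pα - Real.log P1) ≤ Real.log fmax + Real.log J by linarith) hc
    constructor <;> linarith
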